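/- Let z∞ ∈ [0,1) and suppose 0 ≤ γ₊ ≤ 2Γ (the CP-divisible case). Then σ(ℓ,z) ≥ 0 for every ℓ ≥ 0 and z ∈ ℝ with ℓ² + z² < 1. -/

import Mathlib

/-- Inverse hyperbolic tangent: arctanh r = (1/2) log((1+r)/(1-r)). -/
noncomputable def artanh (r : ℝ) : ℝ := (1/2) * Real.log ((1 + r) / (1 - r))

/-- F(r) := arctanh(r)/r with the convention F(0) = 1. -/
noncomputable def F (r : ℝ) : ℝ := if r = 0 then 1 else artanh r / r

/-- Fixed-point entropy production of the phase-covariant qubit dynamics,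
extended to the whole Bloch ball, at the point with Bloch coordinates (ℓ, z). -/
noncomputable def sigmaFP (Γ γp zinf ℓ z : ℝ) : ℝ :=
  Γ * ℓ ^ 2 * F (Real.sqrt (ℓ ^ 2 + z ^ 2)) +
    γp * (zinf - z) * (artanh zinf - z * F (Real.sqrt (ℓ ^ 2 + z ^ 2)))

/-!
The production is linear in the rates and, since `F > 0`, increasing in `Γ`, so it suffices to treat
`Γ = 1`, `γ₊ = 2`; by the spin flip `(z∞, z) ↦ (-z∞, -z)` we may also assume `0 ≤ z∞`. With
`r² = ℓ² + z²`, `f = F r`, `w = z∞` and `a = artanh w` the production is then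
`(r² - z²) f + 2 (w - z) (a - z f)`, for fixed `r` a convex quadratic in `z` with vertex
`w + a / f`.
If the vertex lies to the right of `r`, the minimum over `z ≤ r` is the value
`2 (w - r) (artanh w - artanh r)` at `z = r`, nonnegative since `artanh` is increasing. Otherwise
`r f ≥ a + w f` with `a, w ≥ 0`, so already the vertex value `((r f)² - (w f)² - a²) / f` is
nonnegative.
-/

lemma artanh_eq_real_artanh {x : ℝ} (hx : x ∈ Set.Icc (-1) 1) : artanh x = Real.artanh x :=
  (Real.artanh_eq_half_log hx).symm

lemma artanh_neg (x : ℝ) : artanh (-x) = -artanh x := by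
  have hinv : (1 + -x) / (1 - -x) = ((1 + x) / (1 - x))⁻¹ := by
    rw [inv_div, sub_neg_eq_add, ← sub_eq_add_neg]
  rw [artanh, artanh, hinv, Real.log_inv, mul_neg]

lemma artanh_nonneg {x : ℝ} (h0 : 0 ≤ x) (h1 : x ≤ 1) : 0 ≤ artanh x := by
  rw [artanh_eq_real_artanh ⟨by linarith, h1⟩]
  exact Real.artanh_nonneg h0

lemma strictMonoOn_artanh : StrictMonoOn artanh (Set.Ioo (-1) 1) :=
  Real.strictMonoOn_artanh.congr fun _ hx =>
    (artanh_eq_real_artanh (Set.Ioo_subset_Icc_self hx)).symm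

lemma artanh_sub_mul_sub_nonneg {x y : ℝ} (hx : x ∈ Set.Ioo (-1) 1) (hy : y ∈ Set.Ioo (-1) 1) :
    0 ≤ (artanh y - artanh x) * (y - x) :=
  (monovaryOn_id_iff.2 strictMonoOn_artanh.monotoneOn).sub_mul_sub_nonneg hx hy

lemma mul_F (r : ℝ) : r * F r = artanh r := by
  unfold F
  split_ifs with hr
  · simp [hr, artanh]
  · exact mul_div_cancel₀ _ hr

lemma F_pos {r : ℝ} (hr : r ∈ Set.Ioo (-1) 1) : 0 < F r := by
  unfold F
  split_ifs with h0
  · exact one_pos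
  rw [artanh_eq_real_artanh (Set.Ioo_subset_Icc_self hr)]
  rcases lt_or_gt_of_ne h0 with hneg | hpos
  · exact div_pos_of_neg_of_neg (Real.artanh_neg ⟨hr.1, hneg⟩) hneg
  · exact div_pos (Real.artanh_pos ⟨hpos, hr.2⟩) hpos

lemma quadratic_nonneg_of_endpoint_nonneg {R : Type*} [CommRing R] [LinearOrder R]
    [IsStrictOrderedRing R] {f a w r z : R} (hf : 0 < f) (ha : 0 ≤ a) (hw : 0 ≤ w) (hzr : z ≤ r)
    (hend : 0 ≤ (a - r * f) * (w - r)) :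
    0 ≤ (r ^ 2 - z ^ 2) * f + 2 * ((w - z) * (a - z * f)) := by
  rcases le_total (r * f) (a + w * f) with hvertex | hvertex
  · have hzf : z * f ≤ r * f := mul_le_mul_of_nonneg_right hzr hf.le
    have hdiff : 0 ≤ (r - z) * (2 * (a + w * f) - (z * f + r * f)) :=
      mul_nonneg (by linarith) (by linarith)
    calc 0 ≤ 2 * ((a - r * f) * (w - r)) + (r - z) * (2 * (a + w * f) - (z * f + r * f)) := by
          positivity
      _ = (r ^ 2 - z ^ 2) * f + 2 * ((w - z) * (a - z * f)) := by ring
  · have hsq : (a + w * f) ^ 2 ≤ (r * f) ^ 2 := pow_le_pow_left₀ (by positivity) hvertex 2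
    have hcross : 0 ≤ a * (w * f) := by positivity
    refine nonneg_of_mul_nonneg_right ?_ hf
    calc 0 ≤ (z * f - (a + w * f)) ^ 2 + ((r * f) ^ 2 - (a + w * f) ^ 2) + 2 * (a * (w * f)) := by
          linarith [sq_nonneg (z * f - (a + w * f))]
      _ = f * ((r ^ 2 - z ^ 2) * f + 2 * ((w - z) * (a - z * f))) := by ring

lemma sigmaFP_neg (Γ γp zinf ℓ z : ℝ) :
    sigmaFP Γ γp (-zinf) ℓ (-z) = sigmaFP Γ γp zinf ℓ z := by
  simp only [sigmaFP, artanh_neg, neg_sq]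
  ring

lemma sqrt_mem_Ioo {x : ℝ} (hx : x < 1) : √x ∈ Set.Ioo (-1) 1 :=
  ⟨by linarith [Real.sqrt_nonneg x], (Real.sqrt_lt' one_pos).2 (by simpa using hx)⟩

lemma half_mul_sigmaFP_one_two_le {Γ γp ℓ z : ℝ} (zinf : ℝ) (hCP : γp ≤ 2 * Γ)
    (hball : ℓ ^ 2 + z ^ 2 < 1) :
    γp / 2 * sigmaFP 1 2 zinf ℓ z ≤ sigmaFP Γ γp zinf ℓ z := by
  have hF : 0 < F √(ℓ ^ 2 + z ^ 2) := F_pos (sqrt_mem_Ioo hball)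
  have hexcess : 0 ≤ (Γ - γp / 2) * (ℓ ^ 2 * F √(ℓ ^ 2 + z ^ 2)) :=
    mul_nonneg (by linarith) (by positivity)
  unfold sigmaFP
  linarith

lemma sigmaFP_one_two_nonneg_of_nonneg {zinf ℓ z : ℝ} (hz0 : 0 ≤ zinf) (hz1 : zinf < 1)
    (hball : ℓ ^ 2 + z ^ 2 < 1) : 0 ≤ sigmaFP 1 2 zinf ℓ z := by
  set r := √(ℓ ^ 2 + z ^ 2) with hr
  have hr1 : r ∈ Set.Ioo (-1) 1 := sqrt_mem_Ioo hball
  have hzr : z ≤ r := Real.le_sqrt_of_sq_le (by linarith [sq_nonneg ℓ])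
  have hend : 0 ≤ (artanh zinf - r * F r) * (zinf - r) := by
    rw [mul_F]
    exact artanh_sub_mul_sub_nonneg hr1 ⟨by linarith, hz1⟩
  have hℓ : r ^ 2 - z ^ 2 = ℓ ^ 2 := by
    rw [hr, Real.sq_sqrt (by positivity), add_sub_cancel_right]
  have hquad := quadratic_nonneg_of_endpoint_nonneg
    (F_pos hr1) (artanh_nonneg hz0 hz1.le) hz0 hzr hend
  rwa [hℓ, ← mul_assoc, ← one_mul (ℓ ^ 2)] at hquad

lemma sigmaFP_one_two_nonneg {zinf ℓ z : ℝ} (hz : zinf ∈ Set.Ioo (-1) 1)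
    (hball : ℓ ^ 2 + z ^ 2 < 1) : 0 ≤ sigmaFP 1 2 zinf ℓ z := by
  rcases le_total 0 zinf with h0 | h0
  · exact sigmaFP_one_two_nonneg_of_nonneg h0 hz.2 hball
  · rw [← sigmaFP_neg]
    exact sigmaFP_one_two_nonneg_of_nonneg (neg_nonneg.2 h0) (neg_lt.1 hz.1) (by rwa [neg_sq])

theorem sigmaFP_nonneg_of_CP_divisible_general {zinf Γ γp ℓ z : ℝ} (hz : zinf ∈ Set.Ioo (-1) 1)
    (hγ : 0 ≤ γp) (hCP : γp ≤ 2 * Γ) (hball : ℓ ^ 2 + z ^ 2 < 1) :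
    0 ≤ sigmaFP Γ γp zinf ℓ z :=
  calc 0 ≤ γp / 2 * sigmaFP 1 2 zinf ℓ z :=
        mul_nonneg (by positivity) (sigmaFP_one_two_nonneg hz hball)
    _ ≤ sigmaFP Γ γp zinf ℓ z := half_mul_sigmaFP_one_two_le zinf hCP hball

/-- In the CP-divisible case 0 ≤ γ₊ ≤ 2Γ, the entropy production is nonnegative
everywhere on the Bloch ball. -/
theorem sigmaFP_nonneg_of_CP_divisible
    (zinf Γ γp : ℝ) (hz0 : 0 ≤ zinf) (hz1 : zinf < 1)
    (hγ : 0 ≤ γp) (hCP : γp ≤ 2 * Γ)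
    (ℓ z : ℝ) (hℓ : 0 ≤ ℓ) (hball : ℓ ^ 2 + z ^ 2 < 1) :
    0 ≤ sigmaFP Γ γp zinf ℓ z :=
  sigmaFP_nonneg_of_CP_divisible_general ⟨by linarith, hz1⟩ hγ hCP hball
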